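/- Let H be an unweighted MaxCut instance with m edges whose r-round Sherali-Adams solution z = (z_e)_{e∈E_H} (with r ≥ 2) has value Σ_{e∈E_H} z_e = c·m, and let {D_T} be the consistent local distributions on the powered instance G_ℓ constructed from it by the recursive symmetrized sampling process. Define y_{uv} := D_{{u,v}}({{u},{v}}), the probability that exactly one of u,v is chosen. Then: (i) y_e = 2^{−ℓ} for every capacity edge e of G_ℓ and the total capacity of G_ℓ is 2^ℓ, so Σ_{e capacity edge} cap_e·y_e = 1; (ii) Σ_{e demand edge} dem_e·y_e = ℓ·c; hence the sparsity of the fractional solution y, the ratio of its capacity value to its demand value, equals 1/(ℓc). -/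

import Mathlib

attribute [local instance] Classical.propDecidable

open Finset

namespace Stmt19

/-- A Sparsest Cut instance: a finite vertex set `V` with two designated vertices
`s` and `t`, a finite set `E` of (oriented) supply edges with capacities `cap`, and a
finite set `Dm` of demand pairs with demands `dem`. -/
structure SCI where
  V : Type
  fV : Fintype V
  dV : DecidableEq V
  s : V
  t : V
  E : Finset (V × V)
  cap : V × V → ℝ
  Dm : Finset (V × V)
  dem : V × V → ℝ

attribute [instance] SCI.fV SCI.dV

namespace SCI

/-- Capacity of a cut `(S, V∖S)`: total capacity of supply edges crossing it. -/
noncomputable def cutCap (I : SCI) (S : Finset I.V) : ℝ :=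
  ∑ e ∈ I.E.filter (fun e => ¬((e.1 ∈ S) ↔ (e.2 ∈ S))), I.cap e

/-- Demand separated by a cut `(S, V∖S)`: total demand of demand pairs crossing it. -/
noncomputable def cutDem (I : SCI) (S : Finset I.V) : ℝ :=
  ∑ q ∈ I.Dm.filter (fun q => ¬((q.1 ∈ S) ↔ (q.2 ∈ S))), I.dem q

end SCI

/-- Vertex set obtained by replacing each capacity edge `e = (u,v)` of `G1` by a copy
of `Gp`, identifying the `s` of the copy with `u` and its `t` with `v`:  the vertices
of `G1` together with, for every edge `e` of `G1`, a copy of the interior (non-`s`,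
non-`t`) vertices of `Gp`. -/
abbrev glueV (G1 Gp : SCI) : Type :=
  G1.V ⊕ ({e // e ∈ G1.E} × {v : Gp.V // v ≠ Gp.s ∧ v ≠ Gp.t})

/-- Placement of a vertex `v` of the copy of `Gp` corresponding to edge `e` of `G1`:
the copy's `s` is identified with `e.1`, its `t` with `e.2`, and interior vertices
keep their identity inside the copy. -/
noncomputable def embed (G1 Gp : SCI) (e : {e // e ∈ G1.E}) (v : Gp.V) : glueV G1 Gp :=
  if h1 : v = Gp.s then Sum.inl e.1.1
  else if h2 : v = Gp.t then Sum.inl e.1.2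
  else Sum.inr (e, ⟨v, h1, h2⟩)

/-- One step of the powering operation: replace every capacity edge `e = (u,v)` of
`G1` by a copy of `Gp` (scaled by `cap e`, with its `s` identified with `u` and its
`t` with `v`), and retain the demand edges of `G1` as the new top-level demands. -/
noncomputable def glue (G1 Gp : SCI) : SCI where
  V := glueV G1 Gp
  fV := inferInstance
  dV := inferInstance
  s := Sum.inl G1.s
  t := Sum.inl G1.t
  E := G1.E.attach.biUnion fun e =>
        Gp.E.image fun f => (embed G1 Gp e f.1, embed G1 Gp e f.2)
  cap := fun p => ∑ e ∈ G1.E.attach, ∑ f ∈ Gp.E,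
        if (embed G1 Gp e f.1, embed G1 Gp e f.2) = p then G1.cap e.1 * Gp.cap f else 0
  Dm := (G1.Dm.image fun q => ((Sum.inl q.1 : glueV G1 Gp), (Sum.inl q.2 : glueV G1 Gp))) ∪
        (G1.E.attach.biUnion fun e =>
          Gp.Dm.image fun f => (embed G1 Gp e f.1, embed G1 Gp e f.2))
  dem := fun p =>
      (∑ q ∈ G1.Dm,
        if ((Sum.inl q.1 : glueV G1 Gp), (Sum.inl q.2 : glueV G1 Gp)) = p
        then G1.dem q else 0) +
      ∑ e ∈ G1.E.attach, ∑ f ∈ Gp.Dm,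
        if (embed G1 Gp e f.1, embed G1 Gp e f.2) = p then G1.cap e.1 * Gp.dem f else 0

/-- The powered instance: `Gpow G1 k` is the instance `G_{k+1}` of the paper, i.e.
`Gpow G1 0 = G₁` and `Gpow G1 k = G_{k+1}` is obtained from `G₁` by replacing each
capacity edge with a copy of `G_k`. -/
noncomputable def Gpow (G1 : SCI) : ℕ → SCI
  | 0 => G1
  | k + 1 => glue G1 (Gpow G1 k)

/-- The base instance `G₁` built from a MaxCut instance `H` on `[n]` with `m` edges:
vertex set `{s,t} ∪ [n]` (`s = inr false`, `t = inr true`), supply edges `(s,i)` and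
`(i,t)` of capacity `deg_H(i)/(2m)` for each `i`, and demand `1/m` between `i` and `j`
for each edge `{i,j}` of `H` (each such unordered pair listed once). -/
noncomputable def buildG1 (n : ℕ) (H : SimpleGraph (Fin n)) [DecidableRel H.Adj] : SCI where
  V := Fin n ⊕ Bool
  fV := inferInstance
  dV := inferInstance
  s := Sum.inr false
  t := Sum.inr true
  E := (Finset.univ.image fun i : Fin n =>
          ((Sum.inr false : Fin n ⊕ Bool), (Sum.inl i : Fin n ⊕ Bool))) ∪
       (Finset.univ.image fun i : Fin n =>
          ((Sum.inl i : Fin n ⊕ Bool), (Sum.inr true : Fin n ⊕ Bool)))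
  cap := fun p =>
    match p with
    | (Sum.inr false, Sum.inl i) => (H.degree i : ℝ) / (2 * H.edgeFinset.card)
    | (Sum.inl i, Sum.inr true) => (H.degree i : ℝ) / (2 * H.edgeFinset.card)
    | _ => 0
  Dm := (Finset.univ.filter fun p : Fin n × Fin n => H.Adj p.1 p.2 ∧ p.1 < p.2).image
          (fun p => ((Sum.inl p.1 : Fin n ⊕ Bool), (Sum.inl p.2 : Fin n ⊕ Bool)))
  dem := fun p =>
    match p with
    | (Sum.inl i, Sum.inl j) => if H.Adj i j then 1 / (H.edgeFinset.card : ℝ) else 0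
    | _ => 0


/-- The law of `X ∩ T`, where `X` is the `s`-side produced by the symmetrized sampling
process on the base instance `G₁`:  `s` is always placed in `X` and `t` never is; a
subset of the base vertices `[n]` appearing in `T` is drawn from the local
Sherali-Adams distribution `F` and, with probability `1/2`, complemented. -/
noncomputable def baseDist (n : ℕ) (F : Finset (Fin n) → Finset (Fin n) → ℝ)
    (T A : Finset (Fin n ⊕ Bool)) : ℝ :=
  if A ⊆ T ∧ (Sum.inr false ∈ T → Sum.inr false ∈ A) ∧ Sum.inr true ∉ A then
    (1 / 2) *
      (F (Finset.univ.filter fun i => Sum.inl i ∈ T)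
         (Finset.univ.filter fun i => Sum.inl i ∈ A) +
       F (Finset.univ.filter fun i => Sum.inl i ∈ T)
         ((Finset.univ.filter fun i => Sum.inl i ∈ T) \
          (Finset.univ.filter fun i => Sum.inl i ∈ A)))
  else 0

/-- One level of the recursive symmetrized sampling process on the powered instance
`glue G₁ Gp` (where `G₁ = buildG1 n H`), expressed as the law of `X ∩ T` where `X` is
the sampled `s`-side:  first the base vertices of the extension `T₁` of `T` (the
endpoints of every copy of `Gp` meeting `T`, together with `s`, `t` and the base part
of `T`) are assigned by the symmetrized base rule; then every copy of `Gp` whose two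
endpoints lie on the same side is placed entirely on that side, while each copy whose
endpoints are separated is cut by recursing inside the copy (via `Dprev`, with the
copy's `s` on the appropriate side). -/
noncomputable def Dstep (n : ℕ) (H : SimpleGraph (Fin n)) [DecidableRel H.Adj]
    (F : Finset (Fin n) → Finset (Fin n) → ℝ) (Gp : SCI)
    (Dprev : Finset Gp.V → Finset Gp.V → ℝ)
    (T A : Finset (glueV (buildG1 n H) Gp)) : ℝ :=
  let G1 := buildG1 n H
  let Tb : Finset G1.V := Finset.univ.filter fun b => (Sum.inl b : glueV G1 Gp) ∈ T
  let Ab : Finset G1.V := Finset.univ.filter fun b => (Sum.inl b : glueV G1 Gp) ∈ A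
  let Tc : {e // e ∈ G1.E} → Finset Gp.V := fun e =>
    Finset.univ.filter fun v =>
      ∃ h : v ≠ Gp.s ∧ v ≠ Gp.t, (Sum.inr (e, ⟨v, h⟩) : glueV G1 Gp) ∈ T
  let Ac : {e // e ∈ G1.E} → Finset Gp.V := fun e =>
    Finset.univ.filter fun v =>
      ∃ h : v ≠ Gp.s ∧ v ≠ Gp.t, (Sum.inr (e, ⟨v, h⟩) : glueV G1 Gp) ∈ A
  let T1 : Finset G1.V :=
    insert G1.s (insert G1.t
      (Tb ∪ G1.E.attach.biUnion fun e => if Tc e ≠ ∅ then {e.1.1, e.1.2} else ∅))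
  if A ⊆ T then
    ∑ β ∈ T1.powerset,
      baseDist n F T1 β * (if β ∩ Tb = Ab then 1 else 0) *
      ∏ e ∈ G1.E.attach,
        (if e.1.1 ∈ β ∧ e.1.2 ∈ β then (if Ac e = Tc e then (1 : ℝ) else 0)
         else if e.1.1 ∉ β ∧ e.1.2 ∉ β then (if Ac e = ∅ then (1 : ℝ) else 0)
         else if e.1.1 ∈ β then
           Dprev (insert Gp.s (insert Gp.t (Tc e))) (insert Gp.s (Ac e))
         else
           Dprev (insert Gp.s (insert Gp.t (Tc e))) (insert Gp.s (Tc e \ Ac e)))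
  else 0

/-- The family of local distributions `D_T` on the powered instance
`G_{k+1} = Gpow (buildG1 n H) k`, defined by the recursive symmetrized sampling
process: `D_T(A)` is the probability that the sampled `s`-side `X` satisfies
`X ∩ T = A`. -/
noncomputable def Dfam (n : ℕ) (H : SimpleGraph (Fin n)) [DecidableRel H.Adj]
    (F : Finset (Fin n) → Finset (Fin n) → ℝ) :
    (k : ℕ) → Finset (Gpow (buildG1 n H) k).V → Finset (Gpow (buildG1 n H) k).V → ℝ
  | 0 => baseDist n F
  | k + 1 => Dstep n H F (Gpow (buildG1 n H) k) (Dfam n H F k)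

/-! A sampled cut separates two vertices of the copy at an edge `e` exactly when it separates the
ends of `e` and the recursive cut inside the copy separates the two vertices; exchanging the sides
of that inner cut does not matter. Hence `y` is multiplicative along copies, and so are the
capacities. On `G₁` every supply edge has `y = 1/2` and the total capacity is `2`, which gives the
`2^{-ℓ}` and `2^ℓ`. The level-`ℓ` demands contribute `c`, while the copies contribute the demand
value of `G_{ℓ-1}` weighted by `∑ cap_e y_e = 1`, so each level adds `c` to the demand value. -/

section Terminals

variable {V : Type*} {s t : V} {T A : Finset V}

/-- `A` can be the trace on `T` of a cut side that contains `s` but not `t`. -/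
def Admissible (s t : V) (T A : Finset V) : Prop :=
  A ⊆ T ∧ (s ∈ T → s ∈ A) ∧ t ∉ A

variable [DecidableEq V] {D : Finset V → Finset V → ℝ}

/-- Local weights `D T A` of the traces `A` of a random cut on vertex sets `T`, for cuts that
put `s` on the chosen side and `t` on the other. Of consistency, only the part about adjoining
`s` and `t` to `T` is required. -/
structure IsPinned (s t : V) (D : Finset V → Finset V → ℝ) : Prop where
  admissible_of_ne_zero : ∀ {T A}, D T A ≠ 0 → Admissible s t T A
  insert_terminals : ∀ {T A}, Admissible s t T A →
    D (insert s (insert t T)) (insert s A) = D T A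
  empty_eq_one : D ∅ ∅ = 1

/-- The paper's `y_{uv}`: the weight of the event that exactly one of `u`, `v` is chosen. -/
def sepProb (D : Finset V → Finset V → ℝ) (u v : V) : ℝ :=
  D {u, v} {u} + D {u, v} {v}

lemma Admissible.insert_terminals (h : Admissible s t T A) (hst : s ≠ t) :
    Admissible s t (insert s (insert t T)) (insert s A) := by
  refine ⟨insert_subset_insert s (h.1.trans (subset_insert t T)), fun _ => mem_insert_self s A, ?_⟩
  simpa [hst.symm] using h.2.2

lemma Admissible.insert_inter (h : Admissible s t T A) : insert s A ∩ T = A := by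
  obtain ⟨hAT, hs, -⟩ := h
  ext x
  have := @hAT x
  grind

lemma Admissible.eq_insert_inter (h : Admissible s t (insert s (insert t T)) A) :
    A = insert s (A ∩ T) := by
  obtain ⟨hAT, hs, ht⟩ := h
  ext x
  have := @hAT x
  grind

lemma Admissible.inter (h : Admissible s t (insert s (insert t T)) A) :
    Admissible s t T (A ∩ T) := by
  obtain ⟨-, hs, ht⟩ := h
  refine ⟨inter_subset_right, fun hsT => ?_, fun htA => ht (mem_inter.1 htA).1⟩
  exact mem_inter.2 ⟨hs (mem_insert_self _ _), hsT⟩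

lemma Admissible.inter_insert_terminals_eq_iff (h : Admissible s t T A) {β : Finset V}
    (hs : s ∈ β) (ht : t ∉ β) : β ∩ insert s (insert t T) = insert s A ↔ β ∩ T = A := by
  have hA (x) := @h.1 x
  have hsA := h.2.1
  simp only [Finset.ext_iff, mem_inter, mem_insert]
  grind

lemma eq_of_sdiff_terminals_eq {B : Finset V} (hs : s ∈ A ↔ s ∈ B) (ht : t ∈ A ↔ t ∈ B)
    (h : A \ {s, t} = B \ {s, t}) : A = B := by
  ext x
  have hx := Finset.ext_iff.1 h x
  simp only [mem_sdiff, mem_insert, mem_singleton] at hx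
  grind

namespace IsPinned

lemma apply_pair_eq_one (h : IsPinned s t D) : D {s, t} {s} = 1 := by
  have hadm : Admissible s t ∅ ∅ := ⟨Subset.rfl, by simp, by simp⟩
  simpa [h.empty_eq_one] using h.insert_terminals hadm

lemma ne (h : IsPinned s t D) : s ≠ t := by
  have hadm := h.admissible_of_ne_zero (ne_of_eq_of_ne h.apply_pair_eq_one one_ne_zero)
  exact fun hst => hadm.2.2 (by simp [hst])

lemma sum_powerset_insert_terminals (h : IsPinned s t D) (T : Finset V) (g : Finset V → ℝ) :
    ∑ β ∈ (insert s (insert t T)).powerset, D (insert s (insert t T)) β * g β =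
      ∑ γ ∈ T.powerset, D T γ * g (insert s γ) := by
  have value {β} (hβ : Admissible s t (insert s (insert t T)) β) :
      D (insert s (insert t T)) β = D T (β ∩ T) := by
    rw [← h.insert_terminals hβ.inter, ← hβ.eq_insert_inter]
  have admissible {R β} (hβ : D R β * g β ≠ 0) : Admissible s t R β :=
    h.admissible_of_ne_zero (left_ne_zero_of_mul hβ)
  refine sum_bij_ne_zero (fun β _ _ => β ∩ T) (fun β _ _ => by simp)
    (fun β _ hβ β' _ hβ' heq => ?_) (fun γ _ hne => ?_) (fun β _ hβ => ?_)
  · rw [(admissible hβ).eq_insert_inter, (admissible hβ').eq_insert_inter, heq]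
  · have hadm := h.admissible_of_ne_zero (left_ne_zero_of_mul hne)
    refine ⟨insert s γ, ?_, ?_, hadm.insert_inter⟩
    · exact mem_powerset.2 (insert_subset_insert s (hadm.1.trans (subset_insert t T)))
    · rwa [h.insert_terminals hadm]
  · rw [value (admissible hβ), ← (admissible hβ).eq_insert_inter]

lemma sum_powerset_separated (h : IsPinned s t D) {u v : V} (huv : u ≠ v) (x y : ℝ) :
    ∑ β ∈ (insert s (insert t ({u, v} : Finset V))).powerset,
      D (insert s (insert t {u, v})) β *
      (if u ∈ β then (if v ∈ β then 0 else x) else if v ∈ β then y else 0) =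
      D {u, v} {u} * x + D {u, v} {v} * y := by
  let g (β : Finset V) : ℝ := if u ∈ β then (if v ∈ β then 0 else x) else if v ∈ β then y else 0
  have hterm (γ) : D {u, v} γ * g (insert s γ) = D {u, v} γ * g γ := by
    by_cases hγ : D {u, v} γ = 0
    · simp [hγ]
    · have htrace := (h.admissible_of_ne_zero hγ).insert_inter
      have hu : u ∈ insert s γ ↔ u ∈ γ := by grind
      have hv : v ∈ insert s γ ↔ v ∈ γ := by grind
      simp only [g, hu, hv]
  rw [h.sum_powerset_insert_terminals {u, v} g]
  simp only [hterm]
  rw [sum_powerset_insert (by simpa using huv), ← insert_empty_eq v,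
    sum_powerset_insert (notMem_empty v), sum_powerset_insert (notMem_empty v)]
  simp [g, huv, huv.symm]
  ring

lemma apply_sdiff_terminals (h : IsPinned s t D) (hadm : Admissible s t T A) :
    D (insert s (insert t (T \ {s, t}))) (insert s (A \ {s, t})) = D T A := by
  rw [← h.insert_terminals hadm]
  have := hadm.2.2
  congr 1 <;> grind

lemma sepProb_source (h : IsPinned s t D) {u : V} (hu : u ≠ s) :
    sepProb D s u = D {u} ∅ := by
  have hst := h.ne
  have hzero : D {s, u} {u} = 0 := by
    by_contra h0
    exact hu (mem_singleton.1 ((h.admissible_of_ne_zero h0).2.1 (mem_insert_self _ _))).symm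
  have hpair : Admissible s t {s, u} {s} := ⟨by simp, by simp, by simpa using hst.symm⟩
  have hsingle : Admissible s t {u} ∅ := ⟨by simp, by simpa using hu.symm, by simp⟩
  rw [sepProb, hzero, add_zero, ← h.insert_terminals hpair, ← h.insert_terminals hsingle]
  congr 1 <;> grind

lemma sepProb_sink (h : IsPinned s t D) {u : V} (hu : u ≠ t) :
    sepProb D u t = D {u} {u} := by
  have hst := h.ne
  have hzero : D {u, t} {t} = 0 := by
    by_contra h0
    exact (h.admissible_of_ne_zero h0).2.2 (mem_singleton_self t)
  have hpair : Admissible s t {u, t} {u} := ⟨by simp, by simp [hst], by simpa using hu.symm⟩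
  have hsingle : Admissible s t {u} {u} := ⟨by simp, id, by simpa using hu.symm⟩
  rw [sepProb, hzero, add_zero, ← h.insert_terminals hpair, ← h.insert_terminals hsingle]
  congr 1
  grind

end IsPinned

end Terminals

section Gluing

variable {G1 Gp : SCI}

/-- The original vertices of `G1` lying in `T` (the paper's `T ∩ V(G₁)`). -/
noncomputable def basePart (T : Finset (glueV G1 Gp)) : Finset G1.V :=
  Finset.univ.filter fun b => (Sum.inl b : glueV G1 Gp) ∈ T

/-- The vertices of `T` interior to the copy of `Gp` at the edge `e`, viewed in `Gp`. -/
noncomputable def interiorPart (T : Finset (glueV G1 Gp)) (e : {e // e ∈ G1.E}) :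
    Finset Gp.V :=
  Finset.univ.filter fun v =>
    ∃ h : v ≠ Gp.s ∧ v ≠ Gp.t, (Sum.inr (e, ⟨v, h⟩) : glueV G1 Gp) ∈ T

/-- The base vertices that have to be sampled in order to determine a cut on `T`, namely the
set `T₁` in `Dstep`. -/
noncomputable def baseExtension (T : Finset (glueV G1 Gp)) : Finset G1.V :=
  insert G1.s (insert G1.t
    (basePart T ∪
      G1.E.attach.biUnion fun e => if interiorPart T e ≠ ∅ then {e.1.1, e.1.2} else ∅))

/-- The conditional weight of the trace of `A` inside the copy of `Gp` at `e`, given that the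
base vertices on the side of `s` are those in `β`. -/
noncomputable def copyFactor (D : Finset Gp.V → Finset Gp.V → ℝ) (T A : Finset (glueV G1 Gp))
    (β : Finset G1.V) (e : {e // e ∈ G1.E}) : ℝ :=
  if e.1.1 ∈ β ∧ e.1.2 ∈ β then (if interiorPart A e = interiorPart T e then (1 : ℝ) else 0)
  else if e.1.1 ∉ β ∧ e.1.2 ∉ β then (if interiorPart A e = ∅ then (1 : ℝ) else 0)
  else if e.1.1 ∈ β then
    D (insert Gp.s (insert Gp.t (interiorPart T e))) (insert Gp.s (interiorPart A e))
  else
    D (insert Gp.s (insert Gp.t (interiorPart T e)))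
      (insert Gp.s (interiorPart T e \ interiorPart A e))

/-- The sampling step `Dstep` over an arbitrary base instance `G1` with local weights `bd`. -/
noncomputable def glueDist (bd : Finset G1.V → Finset G1.V → ℝ)
    (D : Finset Gp.V → Finset Gp.V → ℝ) (T A : Finset (glueV G1 Gp)) : ℝ :=
  if A ⊆ T then
    ∑ β ∈ (baseExtension T).powerset,
      bd (baseExtension T) β * (if β ∩ basePart T = basePart A then 1 else 0) *
        ∏ e ∈ G1.E.attach, copyFactor D T A β e
  else 0

variable {bd : Finset G1.V → Finset G1.V → ℝ} {D : Finset Gp.V → Finset Gp.V → ℝ}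
  {T A : Finset (glueV G1 Gp)} {e e' : {e // e ∈ G1.E}}

lemma mem_basePart {b : G1.V} : b ∈ basePart T ↔ (Sum.inl b : glueV G1 Gp) ∈ T := by
  simp [basePart]

lemma mem_interiorPart {v : Gp.V} :
    v ∈ interiorPart T e ↔
      ∃ h : v ≠ Gp.s ∧ v ≠ Gp.t, (Sum.inr (e, ⟨v, h⟩) : glueV G1 Gp) ∈ T := by
  simp [interiorPart]

lemma mem_baseExtension {b : G1.V} :
    b ∈ baseExtension T ↔ b = G1.s ∨ b = G1.t ∨ b ∈ basePart T ∨
      ∃ e : {e // e ∈ G1.E}, (interiorPart T e).Nonempty ∧ (b = e.1.1 ∨ b = e.1.2) := by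
  have mem_ite (e : {e // e ∈ G1.E}) :
      b ∈ (if interiorPart T e ≠ ∅ then ({e.1.1, e.1.2} : Finset G1.V) else ∅) ↔
        (interiorPart T e).Nonempty ∧ (b = e.1.1 ∨ b = e.1.2) := by
    split_ifs with h <;> simp_all [nonempty_iff_ne_empty]
  simp only [baseExtension, mem_insert, mem_union, mem_biUnion, mem_ite, mem_attach, true_and]

lemma copyFactor_eq_one (hD : IsPinned Gp.s Gp.t D) (β : Finset G1.V)
    (hT : interiorPart T e = ∅) (hA : interiorPart A e = ∅) : copyFactor D T A β e = 1 := by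
  have := hD.apply_pair_eq_one
  simp only [copyFactor, hT, hA, Finset.sdiff_self, if_true, insert_empty_eq, this, ite_self]

lemma admissible_of_glueDist_ne_zero (hB : IsPinned G1.s G1.t bd) (h : glueDist bd D T A ≠ 0) :
    Admissible (Sum.inl G1.s) (Sum.inl G1.t) T A := by
  rw [glueDist, ite_ne_right_iff] at h
  obtain ⟨hAT, h⟩ := h
  obtain ⟨β, -, hβ⟩ := exists_ne_zero_of_sum_ne_zero h
  have htrace : β ∩ basePart T = basePart A := by
    by_contra h0
    simp [h0] at hβ
  obtain ⟨-, hs, ht⟩ :=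
    hB.admissible_of_ne_zero (left_ne_zero_of_mul (left_ne_zero_of_mul hβ))
  refine ⟨hAT, fun hsT => ?_, fun htA => ?_⟩
  · rw [← mem_basePart, ← htrace]
    exact mem_inter.2 ⟨hs (mem_baseExtension.2 (Or.inl rfl)), mem_basePart.2 hsT⟩
  · rw [← mem_basePart, ← htrace] at htA
    exact ht (mem_inter.1 htA).1

lemma Admissible.basePart (h : Admissible (Sum.inl G1.s) (Sum.inl G1.t) T A) :
    Admissible G1.s G1.t (basePart T) (basePart A) := by
  obtain ⟨hAT, hs, ht⟩ := h
  refine ⟨fun b hb => ?_, ?_, ?_⟩ <;> simp only [mem_basePart] at *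
  · exact hAT hb
  · exact hs
  · exact ht

lemma basePart_insert_inl (b : G1.V) :
    basePart (insert (Sum.inl b) T) = insert b (basePart T) := by
  ext; simp [mem_basePart]

lemma interiorPart_insert_inl (b : G1.V) :
    interiorPart (insert (Sum.inl b) T) = interiorPart T := by
  ext; simp [mem_interiorPart]

lemma glueDist_insert_terminals (hB : IsPinned G1.s G1.t bd)
    (hadm : Admissible (Sum.inl G1.s) (Sum.inl G1.t) T A) :
    glueDist bd D (insert (Sum.inl G1.s) (insert (Sum.inl G1.t) T))
      (insert (Sum.inl G1.s) A) = glueDist bd D T A := by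
  have hext : baseExtension (insert (Sum.inl G1.s) (insert (Sum.inl G1.t) T)) =
      baseExtension T := by
    ext b
    simp only [mem_baseExtension, basePart_insert_inl, interiorPart_insert_inl, mem_insert]
    grind
  have hsub : insert (Sum.inl G1.s) A ⊆ insert (Sum.inl G1.s) (insert (Sum.inl G1.t) T) :=
    insert_subset_insert _ (hadm.1.trans (subset_insert _ _))
  rw [glueDist, glueDist, if_pos hadm.1, if_pos hsub, hext]
  refine sum_congr rfl fun β _ => ?_
  by_cases hβ : bd (baseExtension T) β = 0
  · simp [hβ]
  obtain ⟨-, hsβ, htβ⟩ := hB.admissible_of_ne_zero hβ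
  have htrace := hadm.basePart.inter_insert_terminals_eq_iff
    (hsβ (mem_baseExtension.2 (Or.inl rfl))) htβ
  simp only [copyFactor, basePart_insert_inl, interiorPart_insert_inl, htrace]

lemma glueDist_image_inl (hB : IsPinned G1.s G1.t bd) (hD : IsPinned Gp.s Gp.t D)
    {B C : Finset G1.V} (hCB : C ⊆ B) :
    glueDist (Gp := Gp) bd D (B.image Sum.inl) (C.image Sum.inl) = bd B C := by
  have hbase (S : Finset G1.V) : basePart (S.image Sum.inl : Finset (glueV G1 Gp)) = S := by
    ext; simp [mem_basePart]
  have hint (S : Finset G1.V) (e) :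
      interiorPart (S.image Sum.inl : Finset (glueV G1 Gp)) e = ∅ := by
    ext; simp [mem_interiorPart]
  have hext : baseExtension (B.image Sum.inl : Finset (glueV G1 Gp)) =
      insert G1.s (insert G1.t B) := by
    ext; simp [mem_baseExtension, hbase, hint]
  have hfactor (β) : ∏ e ∈ G1.E.attach,
      copyFactor (Gp := Gp) D (B.image Sum.inl) (C.image Sum.inl) β e = 1 :=
    prod_eq_one fun e _ => copyFactor_eq_one hD β (hint B e) (hint C e)
  simp only [glueDist, if_pos (image_subset_image hCB), hext, hbase, hfactor, mul_one]
  rw [hB.sum_powerset_insert_terminals B fun β => if β ∩ B = C then 1 else 0]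
  have htrace (γ) : bd B γ * (if insert G1.s γ ∩ B = C then 1 else 0) =
      if γ = C then bd B γ else 0 := by
    by_cases hγ : bd B γ = 0
    · simp [hγ]
    · simp [(hB.admissible_of_ne_zero hγ).insert_inter]
  simp [htrace, hCB]

lemma isPinned_glueDist (hB : IsPinned G1.s G1.t bd) (hD : IsPinned Gp.s Gp.t D) :
    IsPinned (glue G1 Gp).s (glue G1 Gp).t (glueDist bd D) where
  admissible_of_ne_zero := admissible_of_glueDist_ne_zero hB
  insert_terminals := glueDist_insert_terminals hB
  empty_eq_one := by
    have := glueDist_image_inl hB hD (Subset.refl ∅)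
    rw [image_empty, hB.empty_eq_one] at this
    exact this

lemma sepProb_glueDist_inl (hB : IsPinned G1.s G1.t bd) (hD : IsPinned Gp.s Gp.t D)
    (u v : G1.V) :
    sepProb (glueDist bd D) (Sum.inl u : glueV G1 Gp) (Sum.inl v) = sepProb bd u v := by
  have hu := glueDist_image_inl hB hD (show ({u} : Finset G1.V) ⊆ {u, v} by simp)
  have hv := glueDist_image_inl hB hD (show ({v} : Finset G1.V) ⊆ {u, v} by simp)
  simp only [image_insert, image_singleton] at hu hv
  rw [sepProb, hu, hv, sepProb]

lemma embed_eq_inl (hne : Gp.s ≠ Gp.t) {v : Gp.V} {b : G1.V} :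
    embed G1 Gp e v = Sum.inl b ↔ (v = Gp.s ∧ b = e.1.1) ∨ (v = Gp.t ∧ b = e.1.2) := by
  unfold embed
  split_ifs <;> simp_all [eq_comm]

lemma embed_eq_inr {v : Gp.V} {w : {v : Gp.V // v ≠ Gp.s ∧ v ≠ Gp.t}} :
    embed G1 Gp e v = Sum.inr (e', w) ↔ e = e' ∧ v = w.1 := by
  obtain ⟨w, hs, ht⟩ := w
  unfold embed
  split_ifs <;> simp_all [eq_comm]

lemma embed_injective (hne : Gp.s ≠ Gp.t) (he : e.1.1 ≠ e.1.2) :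
    Function.Injective (embed G1 Gp e) := by
  intro u v h
  rcases hv : embed G1 Gp e v with b | ⟨e', w⟩
  · rw [hv, embed_eq_inl hne] at h
    rw [embed_eq_inl hne] at hv
    grind
  · rw [hv, embed_eq_inr] at h
    rw [embed_eq_inr] at hv
    exact h.2.trans hv.2.symm

variable {B C : Finset Gp.V}

lemma mem_basePart_image_embed (hne : Gp.s ≠ Gp.t) {b : G1.V} :
    b ∈ basePart (B.image (embed G1 Gp e)) ↔
      (Gp.s ∈ B ∧ b = e.1.1) ∨ (Gp.t ∈ B ∧ b = e.1.2) := by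
  simp only [mem_basePart, mem_image, embed_eq_inl hne]
  grind

lemma interiorPart_image_embed :
    interiorPart (B.image (embed G1 Gp e)) e = B \ {Gp.s, Gp.t} := by
  ext v
  simp [mem_interiorPart, embed_eq_inr, and_comm]

lemma interiorPart_image_embed_of_ne (h : e' ≠ e) :
    interiorPart (B.image (embed G1 Gp e)) e' = ∅ := by
  ext v
  simp [mem_interiorPart, embed_eq_inr, h.symm]

lemma baseExtension_image_embed (hne : Gp.s ≠ Gp.t) (hB : B.Nontrivial) :
    baseExtension (B.image (embed G1 Gp e)) =
      insert G1.s (insert G1.t {e.1.1, e.1.2}) := by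
  ext b
  simp only [mem_baseExtension, mem_basePart_image_embed hne, mem_insert, mem_singleton]
  refine or_congr_right (or_congr_right ⟨?_, fun hb => ?_⟩)
  · rintro (h | ⟨e', he', h⟩)
    · tauto
    · obtain rfl : e' = e := by
        by_contra h0
        simp [interiorPart_image_embed_of_ne h0] at he'
      exact h
  · by_cases hint : (interiorPart (B.image (embed G1 Gp e)) e).Nonempty
    · exact Or.inr ⟨e, hint, hb⟩
    · obtain ⟨u, hu, v, hv, huv⟩ := hB
      rw [interiorPart_image_embed, not_nonempty_iff_eq_empty, sdiff_eq_empty_iff_subset] at hint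
      have hu' := hint hu
      have hv' := hint hv
      simp only [mem_insert, mem_singleton] at hu' hv'
      grind

lemma inter_basePart_image_embed_eq_iff (hne : Gp.s ≠ Gp.t) (he : e.1.1 ≠ e.1.2)
    (β : Finset G1.V) :
    β ∩ basePart (B.image (embed G1 Gp e)) = basePart (C.image (embed G1 Gp e)) ↔
      (e.1.1 ∈ β ∧ Gp.s ∈ B ↔ Gp.s ∈ C) ∧ (e.1.2 ∈ β ∧ Gp.t ∈ B ↔ Gp.t ∈ C) := by
  simp only [Finset.ext_iff, mem_inter, mem_basePart_image_embed hne]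
  refine ⟨fun h => ?_, ?_⟩
  · have h1 := h e.1.1
    have h2 := h e.1.2
    grind
  · grind

/-- If both ends of `e` lie on one side, so does the whole copy and the trace cannot be proper.
Otherwise the recursive law applies, to the complement when `e.2` is the end on the side of `s`. -/
lemma traceIndicator_mul_copyFactor (hD : IsPinned Gp.s Gp.t D) (he : e.1.1 ≠ e.1.2)
    (hCB : C ⊂ B) (hC : C.Nonempty) (β : Finset G1.V) :
    (if β ∩ basePart (B.image (embed G1 Gp e)) = basePart (C.image (embed G1 Gp e))
        then 1 else 0) *
      copyFactor D (B.image (embed G1 Gp e)) (C.image (embed G1 Gp e)) β e =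
      if e.1.1 ∈ β then (if e.1.2 ∈ β then 0 else D B C)
      else if e.1.2 ∈ β then D B (B \ C) else 0 := by
  have apply_sdiff (C' : Finset Gp.V) : (if Admissible Gp.s Gp.t B C' then
      D (insert Gp.s (insert Gp.t (B \ {Gp.s, Gp.t}))) (insert Gp.s (C' \ {Gp.s, Gp.t}))
      else 0) = D B C' := by
    split_ifs with h
    · exact hD.apply_sdiff_terminals h
    · exact (not_imp_comm.1 hD.admissible_of_ne_zero h).symm
  simp only [inter_basePart_image_embed_eq_iff hD.ne he, copyFactor, interiorPart_image_embed]
  by_cases h1 : e.1.1 ∈ β <;> by_cases h2 : e.1.2 ∈ β <;>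
    simp only [h1, h2, true_and, false_and, and_false, not_true, not_false_iff, if_true, if_false]
  · have : ¬(((Gp.s ∈ B ↔ Gp.s ∈ C) ∧ (Gp.t ∈ B ↔ Gp.t ∈ C)) ∧
        C \ {Gp.s, Gp.t} = B \ {Gp.s, Gp.t}) :=
      fun ⟨⟨hs, ht⟩, h⟩ => hCB.ne (eq_of_sdiff_terminals_eq hs.symm ht.symm h)
    simp only [mul_ite]
    grind
  · rw [← apply_sdiff C]
    have : Admissible Gp.s Gp.t B C ↔ (Gp.s ∈ B ↔ Gp.s ∈ C) ∧ (False ↔ Gp.t ∈ C) := by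
      grind [Admissible]
    simp [this]
  · rw [← apply_sdiff (B \ C)]
    have hadm : Admissible Gp.s Gp.t B (B \ C) ↔
      (False ↔ Gp.s ∈ C) ∧ (Gp.t ∈ B ↔ Gp.t ∈ C) := by
      grind [Admissible]
    have hsd : (B \ C) \ {Gp.s, Gp.t} = (B \ {Gp.s, Gp.t}) \ (C \ {Gp.s, Gp.t}) := by grind
    simp [hadm, hsd]
  · have : ¬(((False ↔ Gp.s ∈ C) ∧ (False ↔ Gp.t ∈ C)) ∧ C \ {Gp.s, Gp.t} = ∅) :=
      fun ⟨⟨hs, ht⟩, h⟩ => hC.ne_empty <|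
        eq_of_sdiff_terminals_eq (by simpa using hs) (by simpa using ht) (by simpa using h)
    simp only [mul_ite]
    grind

lemma glueDist_image_embed (hB : IsPinned G1.s G1.t bd) (hD : IsPinned Gp.s Gp.t D)
    (he : e.1.1 ≠ e.1.2) (hCB : C ⊂ B) (hC : C.Nonempty) :
    glueDist bd D (B.image (embed G1 Gp e)) (C.image (embed G1 Gp e)) =
      bd {e.1.1, e.1.2} {e.1.1} * D B C + bd {e.1.1, e.1.2} {e.1.2} * D B (B \ C) := by
  have hnontrivial : B.Nontrivial := by
    obtain ⟨u, hu⟩ := hC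
    obtain ⟨v, hv, hvC⟩ := exists_of_ssubset hCB
    exact ⟨u, hCB.subset hu, v, hv, fun huv => hvC (huv ▸ hu)⟩
  have hprod (β) : ∏ e' ∈ G1.E.attach,
      copyFactor D (B.image (embed G1 Gp e)) (C.image (embed G1 Gp e)) β e' =
      copyFactor D (B.image (embed G1 Gp e)) (C.image (embed G1 Gp e)) β e :=
    prod_eq_single_of_mem e (mem_attach _ _) fun e' _ h => copyFactor_eq_one hD β
      (interiorPart_image_embed_of_ne h) (interiorPart_image_embed_of_ne h)
  simp only [glueDist, if_pos (image_subset_image hCB.subset), hprod,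
    baseExtension_image_embed hD.ne hnontrivial, mul_assoc,
    traceIndicator_mul_copyFactor hD he hCB hC]
  exact hB.sum_powerset_separated he _ _

lemma sepProb_glueDist_embed (hB : IsPinned G1.s G1.t bd) (hD : IsPinned Gp.s Gp.t D)
    (he : e.1.1 ≠ e.1.2) {u v : Gp.V} (huv : u ≠ v) :
    sepProb (glueDist bd D) (embed G1 Gp e u) (embed G1 Gp e v) =
      sepProb bd e.1.1 e.1.2 * sepProb D u v := by
  have key {a b : Gp.V} (hab : a ≠ b) : glueDist bd D {embed G1 Gp e a, embed G1 Gp e b}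
      {embed G1 Gp e a} = bd {e.1.1, e.1.2} {e.1.1} * D {a, b} {a} +
        bd {e.1.1, e.1.2} {e.1.2} * D {a, b} {b} := by
    have hsdiff : ({a, b} : Finset Gp.V) \ {a} = {b} := by grind
    have := glueDist_image_embed (e := e) hB hD he (B := {a, b}) (C := {a})
      (ssubset_iff.2 ⟨b, by simpa using hab.symm, (pair_comm b a).subset⟩) (singleton_nonempty a)
    rwa [image_insert, image_singleton, image_singleton, hsdiff] at this
  have hvu := key huv.symm
  rw [pair_comm, pair_comm v u] at hvu
  rw [sepProb, sepProb, sepProb, key huv, hvu]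
  ring

end Gluing

section Values

/-- Nothing is degenerate: `s ≠ t`, and neither a supply edge nor a demand pair is a loop. -/
structure SCI.Nondegenerate (G : SCI) : Prop where
  terminals_ne : G.s ≠ G.t
  edge_ne : ∀ e ∈ G.E, e.1 ≠ e.2
  demand_ne : ∀ q ∈ G.Dm, q.1 ≠ q.2

/-- The capacity value `∑ cap_e y_e` of the fractional solution `y` given by `D`. -/
noncomputable def SCI.capValue (G : SCI) (D : Finset G.V → Finset G.V → ℝ) : ℝ :=
  ∑ e ∈ G.E, G.cap e * sepProb D e.1 e.2

/-- The demand value `∑ dem_q y_q` of the fractional solution `y` given by `D`. -/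
noncomputable def SCI.demValue (G : SCI) (D : Finset G.V → Finset G.V → ℝ) : ℝ :=
  ∑ q ∈ G.Dm, G.dem q * sepProb D q.1 q.2

lemma sum_sum_ite_eq_mul {ι α R : Type*} [DecidableEq α] [NonUnitalNonAssocSemiring R]
    {S : Finset ι} {E : Finset α} {φ : ι → α} (hφ : ∀ i ∈ S, φ i ∈ E) (w : ι → R) (g : α → R) :
    ∑ p ∈ E, (∑ i ∈ S, if φ i = p then w i else 0) * g p = ∑ i ∈ S, w i * g (φ i) := by
  simp only [sum_mul, ite_mul, zero_mul]
  rw [sum_comm]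
  exact sum_congr rfl fun i hi => by rw [sum_ite_eq, if_pos (hφ i hi)]

lemma sum_sum_sum_ite_eq_mul {ι κ α R : Type*} [DecidableEq α] [NonUnitalNonAssocSemiring R]
    {S : Finset ι} {K : Finset κ} {E : Finset α} {φ : ι → κ → α}
    (hφ : ∀ i ∈ S, ∀ k ∈ K, φ i k ∈ E) (w : ι → κ → R) (g : α → R) :
    ∑ p ∈ E, (∑ i ∈ S, ∑ k ∈ K, if φ i k = p then w i k else 0) * g p =
      ∑ i ∈ S, ∑ k ∈ K, w i k * g (φ i k) := by
  have hmaps : ∀ x ∈ S ×ˢ K, φ x.1 x.2 ∈ E := fun x hx =>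
    hφ _ (mem_product.1 hx).1 _ (mem_product.1 hx).2
  simpa only [sum_product] using sum_sum_ite_eq_mul hmaps (fun x => w x.1 x.2) g

variable {G1 Gp : SCI} {bd : Finset G1.V → Finset G1.V → ℝ} {D : Finset Gp.V → Finset Gp.V → ℝ}

lemma mem_glue_E {p : glueV G1 Gp × glueV G1 Gp} :
    p ∈ (glue G1 Gp).E ↔ ∃ e, ∃ f ∈ Gp.E, (embed G1 Gp e f.1, embed G1 Gp e f.2) = p := by
  refine mem_biUnion.trans ?_
  simp only [mem_image, mem_attach, true_and]

lemma mem_glue_Dm {p : glueV G1 Gp × glueV G1 Gp} :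
    p ∈ (glue G1 Gp).Dm ↔ (∃ q ∈ G1.Dm, (Sum.inl q.1, Sum.inl q.2) = p) ∨
      ∃ e, ∃ f ∈ Gp.Dm, (embed G1 Gp e f.1, embed G1 Gp e f.2) = p := by
  refine mem_union.trans (or_congr mem_image (mem_biUnion.trans ?_))
  simp only [mem_image, mem_attach, true_and]

lemma sum_cap_glue_mul (g : glueV G1 Gp × glueV G1 Gp → ℝ) :
    ∑ p ∈ (glue G1 Gp).E, (glue G1 Gp).cap p * g p =
      ∑ e ∈ G1.E.attach, ∑ f ∈ Gp.E,
        G1.cap e.1 * Gp.cap f * g (embed G1 Gp e f.1, embed G1 Gp e f.2) := by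
  rw [← sum_sum_sum_ite_eq_mul (E := (glue G1 Gp).E)
    (fun e _ f hf => mem_glue_E.2 ⟨e, f, hf, rfl⟩) (fun e f => G1.cap e.1 * Gp.cap f) g]
  congr!

lemma sum_dem_glue_mul (g : glueV G1 Gp × glueV G1 Gp → ℝ) :
    ∑ p ∈ (glue G1 Gp).Dm, (glue G1 Gp).dem p * g p =
      ∑ q ∈ G1.Dm, G1.dem q * g (Sum.inl q.1, Sum.inl q.2) +
        ∑ e ∈ G1.E.attach, ∑ f ∈ Gp.Dm,
          G1.cap e.1 * Gp.dem f * g (embed G1 Gp e f.1, embed G1 Gp e f.2) := by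
  rw [← sum_sum_sum_ite_eq_mul (E := (glue G1 Gp).Dm)
      (fun e _ f hf => mem_glue_Dm.2 (Or.inr ⟨e, f, hf, rfl⟩)) (fun e f => G1.cap e.1 * Gp.dem f) g,
    ← sum_sum_ite_eq_mul (E := (glue G1 Gp).Dm)
      (fun q hq => mem_glue_Dm.2 (Or.inl ⟨q, hq, rfl⟩)) G1.dem g, ← sum_add_distrib]
  simp only [← add_mul]
  congr!

lemma nondegenerate_glue (h1 : G1.Nondegenerate) (hp : Gp.Nondegenerate) :
    (glue G1 Gp).Nondegenerate where
  terminals_ne := fun h => h1.terminals_ne (Sum.inl_injective h)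
  edge_ne := fun p hp' h => by
    obtain ⟨e, f, hf, rfl⟩ := mem_glue_E.1 hp'
    exact hp.edge_ne f hf (embed_injective hp.terminals_ne (h1.edge_ne e.1 e.2) h)
  demand_ne := fun p hp' h => by
    rcases mem_glue_Dm.1 hp' with ⟨q, hq, rfl⟩ | ⟨e, f, hf, rfl⟩
    · exact h1.demand_ne q hq (Sum.inl_injective h)
    · exact hp.demand_ne f hf (embed_injective hp.terminals_ne (h1.edge_ne e.1 e.2) h)

lemma sum_cap_glue :
    ∑ p ∈ (glue G1 Gp).E, (glue G1 Gp).cap p = (∑ e ∈ G1.E, G1.cap e) * ∑ f ∈ Gp.E, Gp.cap f := by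
  have h := sum_cap_glue_mul (G1 := G1) (Gp := Gp) fun _ => 1
  simp only [mul_one] at h
  rw [← sum_attach G1.E, sum_mul_sum]
  exact h

lemma capValue_glue (hB : IsPinned G1.s G1.t bd) (hD : IsPinned Gp.s Gp.t D)
    (h1 : G1.Nondegenerate) (hp : Gp.Nondegenerate) :
    (glue G1 Gp).capValue (glueDist bd D) = G1.capValue bd * Gp.capValue D := by
  refine (sum_cap_glue_mul fun p => sepProb (glueDist bd D) p.1 p.2).trans ?_
  rw [SCI.capValue, SCI.capValue, ← sum_attach G1.E, sum_mul_sum]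
  refine sum_congr rfl fun e _ => sum_congr rfl fun f hf => ?_
  rw [sepProb_glueDist_embed hB hD (h1.edge_ne e.1 e.2) (hp.edge_ne f hf), mul_mul_mul_comm]

lemma demValue_glue (hB : IsPinned G1.s G1.t bd) (hD : IsPinned Gp.s Gp.t D)
    (h1 : G1.Nondegenerate) (hp : Gp.Nondegenerate) :
    (glue G1 Gp).demValue (glueDist bd D) =
      G1.demValue bd + G1.capValue bd * Gp.demValue D := by
  refine (sum_dem_glue_mul fun p => sepProb (glueDist bd D) p.1 p.2).trans ?_
  rw [SCI.demValue, SCI.capValue, SCI.demValue, ← sum_attach G1.E, sum_mul_sum]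
  refine congrArg₂ (· + ·) (sum_congr rfl fun q _ => ?_)
    (sum_congr rfl fun e _ => sum_congr rfl fun f hf => ?_)
  · rw [sepProb_glueDist_inl hB hD]
  · rw [sepProb_glueDist_embed hB hD (h1.edge_ne e.1 e.2) (hp.demand_ne f hf), mul_mul_mul_comm]

end Values

section Powering

variable {G1 : SCI} {bd : Finset G1.V → Finset G1.V → ℝ}

/-- The recursive sampling process `Dfam` over an arbitrary base instance `G1` with local
weights `bd`. -/
noncomputable def powDist (bd : Finset G1.V → Finset G1.V → ℝ) :
    (k : ℕ) → Finset (Gpow G1 k).V → Finset (Gpow G1 k).V → ℝ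
  | 0 => bd
  | k + 1 => glueDist bd (powDist bd k)

lemma isPinned_powDist (hB : IsPinned G1.s G1.t bd) (k : ℕ) :
    IsPinned (Gpow G1 k).s (Gpow G1 k).t (powDist bd k) := by
  induction k with
  | zero => exact hB
  | succ k ih => exact isPinned_glueDist hB ih

lemma nondegenerate_Gpow (h1 : G1.Nondegenerate) (k : ℕ) : (Gpow G1 k).Nondegenerate := by
  induction k with
  | zero => exact h1
  | succ k ih => exact nondegenerate_glue h1 ih

lemma sepProb_powDist (hB : IsPinned G1.s G1.t bd) (h1 : G1.Nondegenerate) {y : ℝ}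
    (hy : ∀ e ∈ G1.E, sepProb bd e.1 e.2 = y) (k : ℕ) :
    ∀ e ∈ (Gpow G1 k).E, sepProb (powDist bd k) e.1 e.2 = y ^ (k + 1) := by
  induction k with
  | zero =>
    rw [zero_add, pow_one]
    exact hy
  | succ k ih =>
    intro p hp
    obtain ⟨e, f, hf, rfl⟩ := mem_glue_E.1 hp
    refine (sepProb_glueDist_embed hB (isPinned_powDist hB k) (h1.edge_ne e.1 e.2)
      ((nondegenerate_Gpow h1 k).edge_ne f hf)).trans ?_
    rw [hy e.1 e.2, ih f hf, ← pow_succ']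

lemma sum_cap_Gpow (k : ℕ) :
    ∑ e ∈ (Gpow G1 k).E, (Gpow G1 k).cap e = (∑ e ∈ G1.E, G1.cap e) ^ (k + 1) := by
  induction k with
  | zero => rw [zero_add, pow_one]; rfl
  | succ k ih => rw [pow_succ', ← ih]; exact sum_cap_glue

lemma capValue_powDist (hB : IsPinned G1.s G1.t bd) (h1 : G1.Nondegenerate) (k : ℕ) :
    (Gpow G1 k).capValue (powDist bd k) = G1.capValue bd ^ (k + 1) := by
  induction k with
  | zero => rw [zero_add, pow_one]; rfl
  | succ k ih =>
    rw [pow_succ', ← ih]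
    exact capValue_glue hB (isPinned_powDist hB k) h1 (nondegenerate_Gpow h1 k)

lemma demValue_powDist (hB : IsPinned G1.s G1.t bd) (h1 : G1.Nondegenerate) (k : ℕ) :
    (Gpow G1 k).demValue (powDist bd k) =
      (∑ i ∈ range (k + 1), G1.capValue bd ^ i) * G1.demValue bd := by
  induction k with
  | zero => rw [zero_add, sum_range_one, pow_zero, one_mul]; rfl
  | succ k ih =>
    rw [geom_sum_succ, add_one_mul, mul_assoc, ← ih, add_comm (_ * _)]
    exact demValue_glue hB (isPinned_powDist hB k) h1 (nondegenerate_Gpow h1 k)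

end Powering

section Base

variable {n : ℕ} {H : SimpleGraph (Fin n)} [DecidableRel H.Adj]
  {F : Finset (Fin n) → Finset (Fin n) → ℝ}

lemma Dfam_eq_powDist (k : ℕ) : Dfam n H F k = powDist (G1 := buildG1 n H) (baseDist n F) k := by
  induction k with
  | zero => rfl
  | succ k ih => exact congrArg (glueDist (G1 := buildG1 n H) (baseDist n F)) ih

lemma baseDist_eq_ite (T A : Finset (Fin n ⊕ Bool)) :
    baseDist n F T A = if Admissible (Sum.inr false) (Sum.inr true) T A then
      1 / 2 * (F T.toLeft A.toLeft + F T.toLeft (T.toLeft \ A.toLeft)) else 0 := by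
  have htoLeft (S : Finset (Fin n ⊕ Bool)) : univ.filter (fun i => Sum.inl i ∈ S) = S.toLeft := by
    ext; simp
  simp only [baseDist, htoLeft]
  exact if_congr Iff.rfl rfl rfl

lemma baseDist_image_inl {B C : Finset (Fin n)} (hCB : C ⊆ B) :
    baseDist n F (B.image Sum.inl) (C.image Sum.inl) = 1 / 2 * (F B C + F B (B \ C)) := by
  have htoLeft (S : Finset (Fin n)) : (S.image Sum.inl : Finset (Fin n ⊕ Bool)).toLeft = S := by
    ext; simp
  rw [baseDist_eq_ite, if_pos ⟨image_subset_image hCB, by simp, by simp⟩, htoLeft, htoLeft]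

lemma isPinned_baseDist (h0 : F ∅ ∅ = 1) :
    IsPinned (Sum.inr false) (Sum.inr true) (baseDist n F) where
  admissible_of_ne_zero h := by
    rw [baseDist_eq_ite] at h
    exact (ite_ne_right_iff.1 h).1
  insert_terminals h := by
    rw [baseDist_eq_ite, baseDist_eq_ite, if_pos h, if_pos (h.insert_terminals (by simp))]
    simp only [toLeft_insert_inr]
  empty_eq_one := by
    have h := baseDist_image_inl (F := F) (Subset.refl ∅)
    rw [image_empty, Finset.sdiff_empty, h0] at h
    exact h.trans (by norm_num)

lemma sepProb_baseDist_inl {i j : Fin n} (hij : i ≠ j) :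
    sepProb (baseDist n F) (Sum.inl i) (Sum.inl j) = F {i, j} {i} + F {i, j} {j} := by
  have hi := baseDist_image_inl (F := F) (show ({i} : Finset (Fin n)) ⊆ {i, j} by simp)
  have hj := baseDist_image_inl (F := F) (show ({j} : Finset (Fin n)) ⊆ {i, j} by simp)
  rw [show ({i, j} : Finset (Fin n)) \ {i} = {j} by grind] at hi
  rw [show ({i, j} : Finset (Fin n)) \ {j} = {i} by grind] at hj
  simp only [image_insert, image_singleton] at hi hj
  rw [sepProb, hi, hj]
  ring

lemma baseDist_singleton {i : Fin n} (hi : F {i} ∅ + F {i} {i} = 1) {A : Finset (Fin n)}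
    (hA : A ⊆ {i}) : baseDist n F {Sum.inl i} (A.image Sum.inl) = 1 / 2 := by
  rw [← image_singleton, baseDist_image_inl hA]
  rcases subset_singleton_iff.1 hA with rfl | rfl
  · rw [Finset.sdiff_empty, hi, mul_one]
  · rw [Finset.sdiff_self, add_comm, hi, mul_one]

lemma mem_buildG1_E {e : (Fin n ⊕ Bool) × (Fin n ⊕ Bool)} :
    e ∈ (buildG1 n H).E ↔
      (∃ i, (Sum.inr false, Sum.inl i) = e) ∨ ∃ i, (Sum.inl i, Sum.inr true) = e := by
  refine mem_union.trans (or_congr (mem_image.trans ?_) (mem_image.trans ?_)) <;>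
  simp only [mem_univ, true_and]

lemma nondegenerate_buildG1 : (buildG1 n H).Nondegenerate where
  terminals_ne := fun h => Bool.false_ne_true (Sum.inr_injective h)
  edge_ne := fun e he => by
    rcases mem_buildG1_E.1 he with ⟨i, rfl⟩ | ⟨i, rfl⟩
    · exact Sum.inr_ne_inl
    · exact Sum.inl_ne_inr
  demand_ne := fun q hq h => by
    obtain ⟨p, hp, rfl⟩ := mem_image.1 hq
    exact (mem_filter.1 hp).2.1.ne (Sum.inl_injective h)

lemma sepProb_baseDist_of_mem_E (h0 : F ∅ ∅ = 1) (h1 : ∀ i, F {i} ∅ + F {i} {i} = 1) :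
    ∀ e ∈ (buildG1 n H).E, sepProb (baseDist n F) e.1 e.2 = 1 / 2 := by
  intro e he
  rcases mem_buildG1_E.1 he with ⟨i, rfl⟩ | ⟨i, rfl⟩
  · exact ((isPinned_baseDist h0).sepProb_source Sum.inl_ne_inr).trans
      (baseDist_singleton (h1 i) (empty_subset _))
  · exact ((isPinned_baseDist h0).sepProb_sink Sum.inl_ne_inr).trans
      (baseDist_singleton (h1 i) Subset.rfl)

lemma sum_cap_buildG1 (hm : 0 < H.edgeFinset.card) :
    ∑ e ∈ (buildG1 n H).E, (buildG1 n H).cap e = 2 := by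
  have hdeg : ∑ i, (H.degree i : ℝ) = 2 * H.edgeFinset.card := by
    exact_mod_cast H.sum_degrees_eq_twice_card_edges
  have hhalf : ∑ i, (H.degree i : ℝ) / (2 * H.edgeFinset.card) = 1 := by
    rw [← sum_div, hdeg]
    exact div_self (by positivity)
  refine (sum_union (disjoint_left.2 fun e he he' => ?_)).trans ?_
  · obtain ⟨i, -, rfl⟩ := mem_image.1 he
    obtain ⟨j, -, h⟩ := mem_image.1 he'
    exact Sum.inl_ne_inr (congrArg Prod.fst h)
  · refine (congrArg₂ (· + ·) (sum_image fun i _ j _ h => ?_)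
      (sum_image fun i _ j _ h => ?_)).trans ?_
    · exact Sum.inl_injective (congrArg Prod.snd h)
    · exact Sum.inl_injective (congrArg Prod.fst h)
    · exact (congrArg₂ (· + ·) hhalf hhalf).trans one_add_one_eq_two

lemma capValue_baseDist (hm : 0 < H.edgeFinset.card) (h0 : F ∅ ∅ = 1)
    (h1 : ∀ i, F {i} ∅ + F {i} {i} = 1) : (buildG1 n H).capValue (baseDist n F) = 1 := by
  refine (sum_congr rfl fun e he => congrArg _ (sepProb_baseDist_of_mem_E h0 h1 e he)).trans ?_
  rw [← sum_mul, sum_cap_buildG1 hm]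
  norm_num

lemma demValue_baseDist {c : ℝ} (hm : 0 < H.edgeFinset.card)
    (hval : ∑ p ∈ Finset.univ.filter (fun p : Fin n × Fin n => H.Adj p.1 p.2 ∧ p.1 < p.2),
        (F {p.1, p.2} {p.1} + F {p.1, p.2} {p.2}) = c * H.edgeFinset.card) :
    (buildG1 n H).demValue (baseDist n F) = c := by
  refine (sum_image (Sum.inl_injective.prodMap Sum.inl_injective).injOn).trans ?_
  have hterm : ∀ p ∈ Finset.univ.filter fun p : Fin n × Fin n => H.Adj p.1 p.2 ∧ p.1 < p.2,
      (buildG1 n H).dem (Sum.inl p.1, Sum.inl p.2) *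
        sepProb (baseDist n F) (Sum.inl p.1) (Sum.inl p.2) =
      1 / H.edgeFinset.card * (F {p.1, p.2} {p.1} + F {p.1, p.2} {p.2}) := fun p hp => by
    have hadj := (mem_filter.1 hp).2.1
    rw [sepProb_baseDist_inl hadj.ne]
    exact congrArg (· * _) (if_pos hadj)
  refine (sum_congr rfl hterm).trans ?_
  rw [← mul_sum, hval]
  field_simp

end Base

theorem stmt_19_general (n : ℕ) (H : SimpleGraph (Fin n)) [DecidableRel H.Adj]
    (hm : 0 < H.edgeFinset.card) (F : Finset (Fin n) → Finset (Fin n) → ℝ)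
    (hF : ∀ R : Finset (Fin n), R.card ≤ 1 → ∑ A ∈ R.powerset, F R A = 1) (c : ℝ)
    (hval : ∑ p ∈ Finset.univ.filter (fun p : Fin n × Fin n => H.Adj p.1 p.2 ∧ p.1 < p.2),
        (F {p.1, p.2} {p.1} + F {p.1, p.2} {p.2}) = c * H.edgeFinset.card) (k : ℕ) :
    (∀ e ∈ (Gpow (buildG1 n H) k).E,
      sepProb (Dfam n H F k) e.1 e.2 = ((2 : ℝ) ^ (k + 1))⁻¹) ∧
    ∑ e ∈ (Gpow (buildG1 n H) k).E, (Gpow (buildG1 n H) k).cap e = (2 : ℝ) ^ (k + 1) ∧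
    (Gpow (buildG1 n H) k).capValue (Dfam n H F k) = 1 ∧
    (Gpow (buildG1 n H) k).demValue (Dfam n H F k) = ((k + 1 : ℕ) : ℝ) * c ∧
    (Gpow (buildG1 n H) k).capValue (Dfam n H F k) /
      (Gpow (buildG1 n H) k).demValue (Dfam n H F k) = 1 / (((k + 1 : ℕ) : ℝ) * c) := by
  have h0 : F ∅ ∅ = 1 := by simpa using hF ∅ (by simp)
  have h1 (i) : F {i} ∅ + F {i} {i} = 1 := by
    have h := hF {i} (by simp)
    rw [← insert_empty_eq, sum_powerset_insert (notMem_empty i)] at h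
    simpa using h
  have hB : IsPinned (buildG1 n H).s (buildG1 n H).t (baseDist n F) := isPinned_baseDist h0
  have hy := sepProb_baseDist_of_mem_E (H := H) h0 h1
  have hcapValue := capValue_baseDist hm h0 h1
  have hcap : (Gpow (buildG1 n H) k).capValue (Dfam n H F k) = 1 := by
    rw [Dfam_eq_powDist, capValue_powDist hB nondegenerate_buildG1, hcapValue, one_pow]
  have hdem : (Gpow (buildG1 n H) k).demValue (Dfam n H F k) = ((k + 1 : ℕ) : ℝ) * c := by
    rw [Dfam_eq_powDist, demValue_powDist hB nondegenerate_buildG1, hcapValue,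
      demValue_baseDist hm hval]
    simp
  refine ⟨fun e he => ?_, ?_, hcap, hdem, by rw [hcap, hdem]⟩
  · rw [Dfam_eq_powDist, sepProb_powDist hB nondegenerate_buildG1 hy k e he, one_div, inv_pow]
  · rw [sum_cap_Gpow, sum_cap_buildG1 hm]

/-- Let `H` be an unweighted MaxCut instance with `m` edges whose
`r`-round Sherali-Adams solution (given by consistent local distributions `F`, with
`r ≥ 2`) has value `Σ_{e∈E_H} z_e = c·m`, where
`z_{ij} = F({i,j},{i}) + F({i,j},{j})`, and let `D` be the local distributions on the
powered instance `G_ℓ` constructed from it by the recursive symmetrized sampling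
process.  Define `y_{uv} := D_{{u,v}}({{u},{v}})`, the probability that exactly one of
`u, v` is chosen.  Then:
(i) `y_e = 2^{−ℓ}` for every capacity edge `e` of `G_ℓ`, and the total capacity of
`G_ℓ` is `2^ℓ`, so `Σ_e cap_e·y_e = 1`;
(ii) `Σ_e dem_e·y_e = ℓ·c`;
hence the sparsity of the fractional solution `y` — the ratio of its capacity value to
its demand value — equals `1/(ℓc)`. -/
theorem stmt_19 (n : ℕ) (H : SimpleGraph (Fin n)) [DecidableRel H.Adj]
    (hconn : H.Connected) (hm : 0 < H.edgeFinset.card)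
    (r : ℕ) (hr : 2 ≤ r)
    (F : Finset (Fin n) → Finset (Fin n) → ℝ)
    (hF1 : ∀ R : Finset (Fin n), R.card ≤ r → ∀ A ⊆ R, 0 ≤ F R A)
    (hF2 : ∀ R : Finset (Fin n), R.card ≤ r → ∑ A ∈ R.powerset, F R A = 1)
    (hF3 : ∀ R : Finset (Fin n), R.card ≤ r → ∀ Q ⊆ R, ∀ A ⊆ Q,
        F Q A = ∑ B ∈ R.powerset.filter (fun B => B ∩ Q = A), F R B)
    (c : ℝ)
    (hval : ∑ p ∈ Finset.univ.filter (fun p : Fin n × Fin n => H.Adj p.1 p.2 ∧ p.1 < p.2),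
        (F {p.1, p.2} {p.1} + F {p.1, p.2} {p.2}) = c * H.edgeFinset.card)
    (ℓ : ℕ) (hℓ : 1 ≤ ℓ) :
    (∀ e ∈ (Gpow (buildG1 n H) (ℓ - 1)).E,
        Dfam n H F (ℓ - 1) {e.1, e.2} {e.1} + Dfam n H F (ℓ - 1) {e.1, e.2} {e.2}
          = ((2 : ℝ) ^ ℓ)⁻¹) ∧
    (∑ e ∈ (Gpow (buildG1 n H) (ℓ - 1)).E, (Gpow (buildG1 n H) (ℓ - 1)).cap e
        = (2 : ℝ) ^ ℓ) ∧
    (∑ e ∈ (Gpow (buildG1 n H) (ℓ - 1)).E, (Gpow (buildG1 n H) (ℓ - 1)).cap e *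
        (Dfam n H F (ℓ - 1) {e.1, e.2} {e.1} + Dfam n H F (ℓ - 1) {e.1, e.2} {e.2})
        = 1) ∧
    (∑ p ∈ (Gpow (buildG1 n H) (ℓ - 1)).Dm, (Gpow (buildG1 n H) (ℓ - 1)).dem p *
        (Dfam n H F (ℓ - 1) {p.1, p.2} {p.1} + Dfam n H F (ℓ - 1) {p.1, p.2} {p.2})
        = (ℓ : ℝ) * c) ∧
    ((∑ e ∈ (Gpow (buildG1 n H) (ℓ - 1)).E, (Gpow (buildG1 n H) (ℓ - 1)).cap e *
        (Dfam n H F (ℓ - 1) {e.1, e.2} {e.1} + Dfam n H F (ℓ - 1) {e.1, e.2} {e.2})) /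
     (∑ p ∈ (Gpow (buildG1 n H) (ℓ - 1)).Dm, (Gpow (buildG1 n H) (ℓ - 1)).dem p *
        (Dfam n H F (ℓ - 1) {p.1, p.2} {p.1} + Dfam n H F (ℓ - 1) {p.1, p.2} {p.2}))
        = 1 / ((ℓ : ℝ) * c)) := by
  obtain ⟨k, rfl⟩ := Nat.exists_eq_add_of_le' hℓ
  exact stmt_19_general n H hm F (fun R hR => hF2 R (by omega)) c hval k

end Stmt19
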